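/- arXiv:2206.07199 — 6 statements merged into one kernel-verified Lean document; each statement's English description precedes it below -/
import Mathlib

section
/- Let Y be a finite set with k elements equipped with the discrete metric ρ(y,ŷ)=1 if y≠ŷ and 0 otherwise. Let F be a class of functions from a set X to Y and H a class of functions from Y to ℝ^q. Fix ε>0 and m∈ℕ, and suppose N₁ := N_U(1/2, F, m, ρ^∞) is finite. Then N_U(ε, H∘F, m, ‖·‖₂^∞) ≤ N₁ · N_U(ε, H, m·N₁, ‖·‖₂^∞), where H∘F = {h∘f : h∈H, f∈F}. -/
/-!
A `1/2`-cover for the discrete metric contains the points it covers, so on a sample `S` the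
restriction `F|S` has at most `N₁` elements, which can be listed as `φ 0, …, φ (N₁ - 1)` (with
repetitions).  Evaluating them all on `S` gives one sample `T` in `Y` of size `m * N₁`.
Every element of `(H ∘ F)|S` is a block of an element `h|T` of `H|T`, so the `N₁` blocks of each
element of an `ε`-cover of `H|T` together form an `ε`-cover of `(H ∘ F)|S`.
-/

open MeasureTheory Real

/-- Euclidean norm on `Fin q → ℝ`. -/
noncomputable def norm2 {q : ℕ} (x : Fin q → ℝ) : ℝ := Real.sqrt (∑ i, (x i) ^ 2)

/-- Uniform covering number of a class `G` of functions from `Z` to `W`,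
on samples of size `m`, w.r.t. an extended metric `D` on `m`-tuples, at scale `ε`:
the supremum over samples `S` of size `m` of the least cardinality of a subset `C`
of the restriction `G|S` such that every element of `G|S` is within `D`-distance `ε`
of some element of `C` (`⊤` if no finite cover exists). -/
noncomputable def coverNum {Z W : Type*} (G : Set (Z → W)) (m : ℕ)
    (D : (Fin m → W) → (Fin m → W) → ℝ) (ε : ℝ) : ℕ∞ :=
  ⨆ S : Fin m → Z,
    sInf (Set.encard '' {C : Set (Fin m → W) |
      C ⊆ {v | ∃ g ∈ G, v = fun k => g (S k)} ∧
      ∀ g ∈ G, ∃ c ∈ C, D (fun k => g (S k)) c ≤ ε})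

/-- The restriction of `G` to any sample `S` has a cover of size at most the uniform covering
number, provided `D` is at most `ε` on the diagonal: then `G|S` covers itself, so the set of
cover sizes is nonempty and its infimum in `ℕ∞` is attained. -/
lemma exists_cover {Z W : Type*} (G : Set (Z → W)) (m : ℕ)
    (D : (Fin m → W) → (Fin m → W) → ℝ) (ε : ℝ) (hD : ∀ u, D u u ≤ ε) (S : Fin m → Z) :
    ∃ C : Set (Fin m → W), C ⊆ {v | ∃ g ∈ G, v = fun k => g (S k)} ∧
      (∀ g ∈ G, ∃ c ∈ C, D (fun k => g (S k)) c ≤ ε) ∧ C.encard ≤ coverNum G m D ε := by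
  have hne : (Set.encard '' {C : Set (Fin m → W) |
      C ⊆ {v | ∃ g ∈ G, v = fun k => g (S k)} ∧
      ∀ g ∈ G, ∃ c ∈ C, D (fun k => g (S k)) c ≤ ε}).Nonempty :=
    ⟨_, _, ⟨subset_rfl, fun g hg => ⟨_, ⟨g, hg, rfl⟩, hD _⟩⟩, rfl⟩
  obtain ⟨C, ⟨h1, h2⟩, h3⟩ := csInf_mem hne
  refine ⟨C, h1, h2, ?_⟩
  rw [h3]
  exact le_iSup (fun S : Fin m → Z => sInf (Set.encard '' {C : Set (Fin m → W) |
      C ⊆ {v | ∃ g ∈ G, v = fun k => g (S k)} ∧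
      ∀ g ∈ G, ∃ c ∈ C, D (fun k => g (S k)) c ≤ ε})) S

lemma coverNum_le {Z W : Type*} (G : Set (Z → W)) (m : ℕ)
    (D : (Fin m → W) → (Fin m → W) → ℝ) (ε : ℝ) (B : ℕ∞)
    (h : ∀ S : Fin m → Z, ∃ C : Set (Fin m → W),
      C ⊆ {v | ∃ g ∈ G, v = fun k => g (S k)} ∧
      (∀ g ∈ G, ∃ c ∈ C, D (fun k => g (S k)) c ≤ ε) ∧ C.encard ≤ B) :
    coverNum G m D ε ≤ B := by
  refine iSup_le fun S => ?_
  obtain ⟨C, h1, h2, h3⟩ := h S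
  refine le_trans (sInf_le ?_) h3
  exact ⟨C, ⟨h1, h2⟩, rfl⟩

lemma eq_of_discrete_le {Y : Type*} [DecidableEq Y] {m : ℕ} {u v : Fin m → Y}
    (h : (⨆ j, (if u j = v j then (0 : ℝ) else 1)) ≤ 1 / 2) : u = v := by
  funext j
  by_contra hj
  have := (le_ciSup (f := fun j => if u j = v j then (0 : ℝ) else 1)
    (Set.finite_range _).bddAbove j).trans h
  simp only [if_neg hj] at this
  norm_num at this

/-- A nonempty set with at most `N` elements is listed, with repetitions, by `Fin N`. -/
lemma exists_enumeration {A : Type*} {C : Set A} {N : ℕ} (hC : C.Nonempty)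
    (h : C.encard ≤ N) : ∃ φ : Fin N → A, Set.range φ = C := by
  have hfin : C.Finite := Set.finite_of_encard_le_coe h
  have := hfin.fintype
  have : Nonempty C := hC.to_subtype
  have hcard : Fintype.card C ≤ Fintype.card (Fin N) := by
    rw [Set.encard_eq_coe_toFinset_card, Set.toFinset_card] at h
    rw [Fintype.card_fin]
    exact_mod_cast h
  obtain ⟨e⟩ := Function.Embedding.nonempty_of_card_le hcard
  refine ⟨fun i => (Function.invFun e i : C), ?_⟩
  rw [Set.range_comp' (Subtype.val), (Function.invFun_surjective e.injective).range_eq]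
  simp

/-- If `Y` is a finite set with `k` elements carrying the discrete
metric, `F` a class of functions from `X` to `Y` and `H` a class of functions from `Y`
to `ℝ^q`, and `N₁ = N_U(1/2, F, m, ρ^∞)` is finite, then
`N_U(ε, H∘F, m, ‖·‖₂^∞) ≤ N₁ · N_U(ε, H, m·N₁, ‖·‖₂^∞)`. -/
theorem composition_finite_range {X Y : Type*} [Fintype Y] [DecidableEq Y] (k : ℕ)
    (hk : Fintype.card Y = k) (q m : ℕ)
    (F : Set (X → Y)) (H : Set (Y → Fin q → ℝ)) (ε : ℝ) (hε : 0 < ε) (N1 : ℕ)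
    (hN1 : coverNum F m
      (fun u v => ⨆ j, (if u j = v j then (0 : ℝ) else 1)) (1 / 2) = (N1 : ℕ∞)) :
    coverNum {g : X → Fin q → ℝ | ∃ f ∈ F, ∃ h ∈ H, g = h ∘ f} m
        (fun u v => ⨆ j, norm2 (u j - v j)) ε
      ≤ (N1 : ℕ∞) *
        coverNum H (m * N1) (fun u v => ⨆ j, norm2 (u j - v j)) ε := by
  have hdiag : ∀ (n : ℕ) (u : Fin n → Fin q → ℝ), (⨆ j, norm2 (u j - u j)) ≤ ε :=
    fun n u => Real.iSup_le (fun j => by simpa [norm2] using hε.le) hε.le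
  refine coverNum_le _ _ _ _ _ fun S => ?_
  obtain ⟨C, hCsub, hCcov, hCcard⟩ := exists_cover F m
    (fun u v => ⨆ j, (if u j = v j then (0 : ℝ) else 1)) (1 / 2) (fun u => by simp) S
  rw [hN1] at hCcard
  have hmem : ∀ f ∈ F, (fun j => f (S j)) ∈ C := fun f hf => by
    obtain ⟨c, hc, hle⟩ := hCcov f hf
    rwa [eq_of_discrete_le hle]
  rcases C.eq_empty_or_nonempty with hC | hC
  · refine ⟨∅, Set.empty_subset _, ?_, by simp⟩
    rintro g ⟨f, hf, -⟩
    simpa [hC] using hmem f hf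
  obtain ⟨φ, rfl⟩ := exists_enumeration hC hCcard
  -- The pair `(j, i)` indexes the value of the `i`-th listed element of `F|S` at the point `S j`.
  obtain ⟨E, hEsub, hEcov, hEcard⟩ := exists_cover H (m * N1)
    (fun u v => ⨆ j, norm2 (u j - v j)) ε (hdiag _)
    (fun p => φ (finProdFinEquiv.symm p).2 (finProdFinEquiv.symm p).1)
  refine ⟨(fun p : Fin N1 × (Fin (m * N1) → Fin q → ℝ) =>
    fun j => p.2 (finProdFinEquiv (j, p.1))) '' (Set.univ ×ˢ E), ?_, ?_, ?_⟩
  · rintro _ ⟨⟨i, c⟩, ⟨-, hc⟩, rfl⟩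
    obtain ⟨h, hh, rfl⟩ := hEsub hc
    obtain ⟨f, hf, hφ⟩ := hCsub ⟨i, rfl⟩
    exact ⟨h ∘ f, ⟨f, hf, h, hh, rfl⟩, by simp [hφ]⟩
  · rintro _ ⟨f, hf, h, hh, rfl⟩
    obtain ⟨i, hi⟩ := hmem f hf
    obtain ⟨c, hc, hle⟩ := hEcov h hh
    refine ⟨_, ⟨(i, c), ⟨trivial, hc⟩, rfl⟩, Real.iSup_le (fun j => ?_) hε.le⟩
    have := (le_ciSup (Set.finite_range _).bddAbove (finProdFinEquiv (j, i))).trans hle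
    simpa [hi] using this
  · refine (Set.encard_image_le _ _).trans ?_
    rw [Set.encard_prod]
    simpa using mul_le_mul_right hEcard (N1 : ℕ∞)
end

section
/- Let F = {f_w : (0,1)→ℝ, f_w(x)=w·x, for w∈(0,1)} and let H be the singleton class containing h:(0,1)→ℝ, h(y)=1/y. Then for every ε>0 and m∈ℕ: (i) N_U(ε, F, m, ‖·‖₂^{ℓ2}) ≤ ⌈2/ε²⌉; (ii) N_U(ε, H, m, ‖·‖₂^{ℓ2}) = 1; but (iii) the uniform covering number of the composition H∘F = {x ↦ 1/(w·x) : w∈(0,1)} is unbounded: for every ε>0, every m∈ℕ, every sample (x₁,…,x_m)∈(0,1)^m, and every finite set {ŵ₁,…,ŵ_r} ⊆ (0,1), there exists w∈(0,1) such that for every i≤r, sqrt((1/m)·Σ_{k=1}^m (1/(w·x_k) − 1/(ŵᵢ·x_k))²) > ε. -/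
/-!
A class parametrised linearly by `w ∈ (0,1)` inherits the covering numbers of the unit interval,
since the sample points lie in `(0,1)`: with `N = ⌈2/ε²⌉` the midpoints `(j + 1/2)/N`, `j < N`, form
a `1/(2N)`-cover, and `1/(2N) ≤ ε` for every `ε > 0` (`midpoint_cover`). Composing with `y ↦ 1/y`
turns the parameter into `1/w`, which ranges over the unbounded set `(1,∞)`; choosing
`1/w = 1 + ε + ∑ 1/ŵᵢ` keeps every coordinate of `1/(w x)` at distance at least `1 + ε` from that of
`1/(ŵᵢ x)`. Coordinatewise bounds pass to the root mean square by `dL2Real_le_of_abs_le` and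
`le_dL2Real_of_le_abs`.
-/

open MeasureTheory Real

/-- The `ℓ2`-extended metric on `m`-tuples of reals. -/
noncomputable def dL2Real (m : ℕ) (u v : Fin m → ℝ) : ℝ :=
  Real.sqrt ((1 / (m : ℝ)) * ∑ k, (u k - v k) ^ 2)

lemma dL2Real_le_of_abs_le {m : ℕ} (hm : 0 < m) {u v : Fin m → ℝ} {c : ℝ} (hc : 0 ≤ c)
    (h : ∀ k, |u k - v k| ≤ c) : dL2Real m u v ≤ c := by
  have hm' : (0 : ℝ) < m := by exact_mod_cast hm
  refine Real.sqrt_le_iff.2 ⟨hc, ?_⟩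
  have hs : ∑ k, (u k - v k) ^ 2 ≤ ∑ _k : Fin m, c ^ 2 :=
    Finset.sum_le_sum fun k _ => sq_le_sq' (abs_le.1 (h k)).1 (abs_le.1 (h k)).2
  simp only [Finset.sum_const, Finset.card_univ, Fintype.card_fin, nsmul_eq_mul] at hs
  rw [one_div, inv_mul_le_iff₀ hm']
  exact hs

lemma le_dL2Real_of_le_abs {m : ℕ} (hm : 0 < m) {u v : Fin m → ℝ} {c : ℝ} (hc : 0 ≤ c)
    (h : ∀ k, c ≤ |u k - v k|) : c ≤ dL2Real m u v := by
  have hm' : (0 : ℝ) < m := by exact_mod_cast hm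
  refine Real.le_sqrt_of_sq_le ?_
  have hs : ∑ _k : Fin m, c ^ 2 ≤ ∑ k, (u k - v k) ^ 2 :=
    Finset.sum_le_sum fun k _ => by
      rw [← sq_abs (u k - v k)]
      exact pow_le_pow_left₀ hc (h k) 2
  simp only [Finset.sum_const, Finset.card_univ, Fintype.card_fin, nsmul_eq_mul] at hs
  rw [one_div, le_inv_mul_iff₀ hm']
  exact hs

/-- The centres of `⌈2/ε²⌉` equal subintervals form a proper `ε`-cover of `(0,1)`. -/
lemma midpoint_cover {ε : ℝ} (hε : 0 < ε) :
    ∃ p : Fin ⌈2 / ε ^ 2⌉₊ → ℝ, (∀ j, p j ∈ Set.Ioo (0 : ℝ) 1) ∧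
      ∀ w ∈ Set.Ioo (0 : ℝ) 1, ∃ j, |w - p j| ≤ ε := by
  have hN0 : 0 < ⌈2 / ε ^ 2⌉₊ := Nat.ceil_pos.2 (by positivity)
  have hN2 : 2 / ε ^ 2 ≤ (⌈2 / ε ^ 2⌉₊ : ℝ) := Nat.le_ceil _
  generalize ⌈2 / ε ^ 2⌉₊ = N at hN0 hN2
  have hN1 : (1 : ℝ) ≤ N := by exact_mod_cast hN0
  have hNpos : (0 : ℝ) < N := by linarith
  rw [div_le_iff₀ (by positivity)] at hN2
  -- `2Nε < 1` would give `2 ≤ (Nε)ε < ε/2`, so `ε > 4`, contradicting `N ≥ 1`.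
  have hNε : 1 ≤ 2 * (N * ε) := by
    by_contra! hlt
    nlinarith
  refine ⟨fun j => ((j : ℕ) + 1 / 2) / N, fun j => ⟨by positivity, ?_⟩, fun w hw => ?_⟩
  · have : ((j : ℕ) : ℝ) + 1 ≤ N := by exact_mod_cast j.2
    rw [div_lt_one hNpos]
    linarith
  · have hwN : 0 ≤ w * N := mul_nonneg hw.1.le hNpos.le
    have hj : ⌊w * N⌋₊ < N := (Nat.floor_lt hwN).2 (by nlinarith [hw.2])
    refine ⟨⟨⌊w * N⌋₊, hj⟩, ?_⟩
    have h1 := Nat.floor_le hwN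
    have h2 := Nat.lt_floor_add_one (w * N)
    have key : w - ((⌊w * N⌋₊ : ℝ) + 1 / 2) / N = (w * N - ((⌊w * N⌋₊ : ℝ) + 1 / 2)) / N := by
      field_simp
    simp only [key]
    rw [abs_div, abs_of_pos hNpos, div_le_iff₀ hNpos, abs_le]
    constructor <;> linarith

/-- For `F = {x ↦ w·x : w ∈ (0,1)}` and `H = {y ↦ 1/y}` on `(0,1)`:
(i) `N_U(ε, F, m, ‖·‖₂^{ℓ2}) ≤ ⌈2/ε²⌉`, (ii) `N_U(ε, H, m, ‖·‖₂^{ℓ2}) = 1`, yet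
(iii) the composition `H∘F = {x ↦ 1/(w·x)}` has unbounded uniform covering number:
no finite set `{ŵ₁,…,ŵ_r} ⊆ (0,1)` yields an `ε`-cover on any sample. -/
theorem composition_unbounded (ε : ℝ) (hε : 0 < ε) (m : ℕ) (hm : 0 < m) :
    (coverNum {f : Set.Ioo (0 : ℝ) 1 → ℝ |
        ∃ w ∈ Set.Ioo (0 : ℝ) 1, ∀ x, f x = w * (x : ℝ)} m (dL2Real m) ε
      ≤ (⌈2 / ε ^ 2⌉₊ : ℕ∞)) ∧
    (coverNum {h : Set.Ioo (0 : ℝ) 1 → ℝ | ∀ y, h y = 1 / (y : ℝ)} m (dL2Real m) ε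
      = 1) ∧
    (∀ (x : Fin m → Set.Ioo (0 : ℝ) 1) (r : ℕ) (what : Fin r → ℝ),
      (∀ i, what i ∈ Set.Ioo (0 : ℝ) 1) →
      ∃ w ∈ Set.Ioo (0 : ℝ) 1, ∀ i : Fin r,
        ε < Real.sqrt ((1 / (m : ℝ)) *
          ∑ k, (1 / (w * (x k : ℝ)) - 1 / (what i * (x k : ℝ))) ^ 2)) := by
  refine ⟨iSup_le fun S => ?_, le_antisymm (iSup_le fun S => ?_) ?_, fun x r what hwhat => ?_⟩
  · obtain ⟨p, hp, hcov⟩ := midpoint_cover hε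
    let q : Fin ⌈2 / ε ^ 2⌉₊ → Fin m → ℝ := fun j k => p j * (S k : ℝ)
    refine le_trans (sInf_le ⟨Set.range q, ⟨?_, ?_⟩, rfl⟩) ?_
    · rintro _ ⟨j, rfl⟩
      exact ⟨fun x => p j * (x : ℝ), ⟨p j, hp j, fun _ => rfl⟩, rfl⟩
    · rintro g ⟨w, hw, hg⟩
      obtain ⟨j, hj⟩ := hcov w hw
      refine ⟨q j, ⟨j, rfl⟩, dL2Real_le_of_abs_le hm hε.le fun k => ?_⟩
      have hS := (S k).2
      simp only [hg, q, ← sub_mul, abs_mul, abs_of_pos hS.1]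
      exact (mul_le_of_le_one_right (abs_nonneg _) hS.2.le).trans hj
    · rw [← Set.image_univ]
      refine (Set.encard_image_le _ _).trans ?_
      simp
  · refine le_trans (sInf_le ⟨{fun k => 1 / (S k : ℝ)}, ⟨?_, ?_⟩, rfl⟩) (Set.encard_singleton _).le
    · rintro _ rfl
      exact ⟨fun y => 1 / (y : ℝ), fun _ => rfl, rfl⟩
    · intro g hg
      refine ⟨_, rfl, dL2Real_le_of_abs_le hm hε.le fun k => ?_⟩
      simp only [hg (S k), sub_self, abs_zero]
      exact hε.le
  · -- The supremum is bounded below by any one sample; a cover of a nonempty set is nonempty.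
    refine le_iSup_of_le (fun _ => ⟨1 / 2, by norm_num, by norm_num⟩) (le_sInf ?_)
    rintro _ ⟨C, ⟨-, hC⟩, rfl⟩
    obtain ⟨c, hc, -⟩ := hC (fun y => 1 / (y : ℝ)) fun _ => rfl
    exact Set.one_le_encard_iff_nonempty.2 ⟨c, hc⟩
  · have hnn : ∀ i ∈ Finset.univ, 0 ≤ 1 / what i := fun i _ => (one_div_pos.2 (hwhat i).1).le
    have hsum : 0 ≤ ∑ i, 1 / what i := Finset.sum_nonneg hnn
    set M : ℝ := 1 + ε + ∑ i, 1 / what i with hM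
    have hM1 : 1 < M := by linarith
    refine ⟨1 / M, ⟨by positivity, (div_lt_one (by linarith)).2 hM1⟩, fun i => ?_⟩
    have hi : 1 / what i ≤ ∑ i, 1 / what i :=
      Finset.single_le_sum hnn (Finset.mem_univ i)
    refine (lt_one_add ε).trans_le (le_dL2Real_of_le_abs hm (by linarith) fun k => ?_)
    have hx := (x k).2
    have hgap : 1 + ε ≤ M - 1 / what i := by linarith
    have key : 1 / (1 / M * (x k : ℝ)) - 1 / (what i * (x k : ℝ))
        = (M - 1 / what i) / (x k : ℝ) := by
      have := hx.1.ne'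
      have := (hwhat i).1.ne'
      field_simp
    rw [key]
    refine le_trans ?_ (le_abs_self _)
    rw [le_div_iff₀ hx.1]
    nlinarith [hx.2]
end

section
/- For every ε and ε' with 0 < ε' < ε < 1 there exist a class F of functions from ℝ to ℝ and a class H of functions from ℝ to [0,1] such that for every m∈ℕ: N_U(ε', F, m, ‖·‖₂^∞) = 1 and N_U(ε', H, m, ‖·‖₂^∞) ≤ m+1, yet N_U(ε, H∘F, m, ‖·‖₂^∞) ≥ 2^m. Concretely, one may take F = {f:ℝ→ℝ : |f(x)−x| ≤ ε'/2 for all x∈ℝ} and H = {x ↦ 1[x ≥ a] : a∈ℝ} the class of threshold functions. -/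
/-!
Every `f ∈ F` is within `ε' / 2` of the identity, so on any sample the identity alone is a cover.

On a sample of size `m`, the vector `(1[S k ≥ a])ₖ` is determined by the number of its ones, because
the sets `{k | a ≤ S k}` are nested as `a` varies; hence `H` has at most `m + 1` restrictions
(`encard_threshold_restriction_le`), which cover themselves.

For the composition, take `m` distinct points in `[0, ε' / 2)` and the threshold at `0`. A function
in `F` may shift any chosen subset of these points by `-ε' / 2`, hence below `0`, and leave the
others in place. So `H ∘ F` realises all `2 ^ m` binary vectors on the sample
(`exists_sample_shattered`). Distinct binary vectors are at distance `1 > ε`, and the centres of a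
cover are themselves binary, so every cover contains all of them.
-/

open MeasureTheory Real

/-- The `∞`-extended metric on `m`-tuples of reals. -/
noncomputable def dInfReal (m : ℕ) (u v : Fin m → ℝ) : ℝ :=
  ⨆ k, |u k - v k|

lemma dInfReal_le {m : ℕ} {u v : Fin m → ℝ} {r : ℝ} (hr : 0 ≤ r)
    (h : ∀ k, |u k - v k| ≤ r) : dInfReal m u v ≤ r :=
  Real.iSup_le h hr

lemma abs_sub_le_dInfReal {m : ℕ} (u v : Fin m → ℝ) (k : Fin m) :
    |u k - v k| ≤ dInfReal m u v :=
  le_ciSup (f := fun k => |u k - v k|) (Set.finite_range _).bddAbove k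

/-- The thresholds restrict to at most `m + 1` vectors on any sample of size `m`: the number of
ones is an injective invariant with values in `{0, …, m}`. -/
lemma encard_threshold_restriction_le {m : ℕ} (S : Fin m → ℝ) :
    (Set.range fun a : ℝ => fun k => if a ≤ S k then (1 : ℝ) else 0).encard
      ≤ ((m + 1 : ℕ) : ℕ∞) := by
  classical
  have hfilter : ∀ a : ℝ, (Finset.univ.filter fun k : Fin m =>
      (if a ≤ S k then (1 : ℝ) else 0) = 1) = Finset.univ.filter fun k => a ≤ S k := by
    intro a
    ext k
    simp
  have hnested : ∀ a b : ℝ, a ≤ b →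
      (Finset.univ.filter fun k => a ≤ S k).card = (Finset.univ.filter fun k => b ≤ S k).card →
      (Finset.univ.filter fun k => b ≤ S k) = Finset.univ.filter fun k => a ≤ S k := by
    intro a b hab hcard
    refine Finset.eq_of_subset_of_card_le (fun k hk => ?_) hcard.le
    simp only [Finset.mem_filter, Finset.mem_univ, true_and] at hk ⊢
    exact hab.trans hk
  have hle := Set.encard_le_encard_of_injOn
    (s := Set.range fun a : ℝ => fun k => if a ≤ S k then (1 : ℝ) else 0)
    (t := ((Finset.range (m + 1) : Finset ℕ) : Set ℕ))
    (f := fun v => (Finset.univ.filter fun k => v k = 1).card)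
    (fun v _ => by
      have := Finset.card_filter_le (Finset.univ : Finset (Fin m)) (fun k => v k = 1)
      simp only [Finset.card_univ, Fintype.card_fin] at this
      simpa using Nat.lt_succ_of_le this)
    (by
      rintro _ ⟨a, rfl⟩ _ ⟨b, rfl⟩ hab
      simp only [hfilter] at hab
      have hset : (Finset.univ.filter fun k => a ≤ S k) = Finset.univ.filter fun k => b ≤ S k := by
        rcases le_total a b with h | h
        · exact (hnested a b h hab).symm
        · exact hnested b a h hab.symm
      funext k
      have hk : a ≤ S k ↔ b ≤ S k := by simpa using Finset.ext_iff.1 hset k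
      simp only [hk])
  rwa [Set.encard_coe_eq_coe_finsetCard, Finset.card_range] at hle

/-- Some sample of size `m` is shattered by the threshold at `0` composed with perturbations of
the identity of size at most `δ`. -/
lemma exists_sample_shattered (m : ℕ) {δ : ℝ} (hδ : 0 < δ) :
    ∃ S : Fin m → ℝ, ∀ T : Finset (Fin m), ∃ f : ℝ → ℝ,
      (∀ x, |f x - x| ≤ δ) ∧ ∀ k, 0 ≤ f (S k) ↔ k ∈ T := by
  classical
  have hm : (0 : ℝ) < m + 1 := by positivity
  have hinj : Function.Injective fun k : Fin m => δ * ((k : ℕ) / ((m : ℝ) + 1)) := by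
    intro j k hjk
    have h := mul_left_cancel₀ hδ.ne' hjk
    rw [div_left_inj' hm.ne'] at h
    exact Fin.ext (by exact_mod_cast h)
  refine ⟨fun k => δ * ((k : ℕ) / ((m : ℝ) + 1)), fun T =>
    ⟨fun x => if x ∈ T.image (fun k : Fin m => δ * ((k : ℕ) / ((m : ℝ) + 1))) then x else x - δ,
      fun x => ?_, fun k => ?_⟩⟩
  · dsimp only
    split_ifs
    · simpa using hδ.le
    · rw [sub_sub_cancel_left, abs_neg, abs_of_pos hδ]
  · have h0 : 0 ≤ δ * (((k : ℕ) : ℝ) / ((m : ℝ) + 1)) := by positivity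
    have h1 : δ * (((k : ℕ) : ℝ) / ((m : ℝ) + 1)) < δ := by
      have hk : ((k : ℕ) : ℝ) < (m : ℝ) + 1 := by
        have : ((k : ℕ) : ℝ) < m := by exact_mod_cast k.2
        linarith
      exact mul_lt_of_lt_one_right hδ ((div_lt_one hm).2 hk)
    have hmem : δ * (((k : ℕ) : ℝ) / ((m : ℝ) + 1)) ∈
        T.image (fun k : Fin m => δ * ((k : ℕ) / ((m : ℝ) + 1))) ↔ k ∈ T :=
      hinj.mem_finset_image
    by_cases hk : k ∈ T
    · simp only [if_pos (hmem.2 hk), h0, hk]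
    · simp only [if_neg (mt hmem.1 hk), hk, iff_false, not_le]
      linarith

/-- For every `0 < ε' < ε < 1` there are classes
`F = {f : ℝ → ℝ | ∀ x, |f x − x| ≤ ε'/2}` and `H` the class of threshold functions
(valued in `[0,1]`) such that for every `m`, `N_U(ε', F, m, ‖·‖₂^∞) = 1` and
`N_U(ε', H, m, ‖·‖₂^∞) ≤ m + 1`, yet `N_U(ε, H∘F, m, ‖·‖₂^∞) ≥ 2^m`. -/
theorem composition_blowup (ε ε' : ℝ) (hε' : 0 < ε') (hε'ε : ε' < ε) (hε : ε < 1) :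
    ∃ (F H : Set (ℝ → ℝ)),
      F = {f : ℝ → ℝ | ∀ x, |f x - x| ≤ ε' / 2} ∧
      H = {h : ℝ → ℝ | ∃ a : ℝ, h = fun x => if a ≤ x then (1 : ℝ) else 0} ∧
      (∀ h ∈ H, ∀ x, h x ∈ Set.Icc (0 : ℝ) 1) ∧
      ∀ m : ℕ,
        coverNum F m (dInfReal m) ε' = 1 ∧
        coverNum H m (dInfReal m) ε' ≤ ((m + 1 : ℕ) : ℕ∞) ∧
        ((2 ^ m : ℕ) : ℕ∞) ≤
          coverNum {g : ℝ → ℝ | ∃ f ∈ F, ∃ h ∈ H, g = h ∘ f} m (dInfReal m) ε := by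
  classical
  refine ⟨_, _, rfl, rfl, ?_, fun m => ⟨?_, ?_, ?_⟩⟩
  · rintro _ ⟨a, rfl⟩ x
    dsimp only
    split_ifs <;> simp
  · have hid : (fun x : ℝ => x) ∈ {f : ℝ → ℝ | ∀ x, |f x - x| ≤ ε' / 2} := by
      intro x
      simpa using (half_pos hε').le
    refine le_antisymm (iSup_le fun S => sInf_le ⟨{S}, ⟨?_, fun g hg => ?_⟩, ?_⟩) ?_
    · rintro _ rfl
      exact ⟨_, hid, rfl⟩
    · exact ⟨S, rfl, dInfReal_le hε'.le fun k => (hg (S k)).trans (by linarith)⟩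
    · exact Set.encard_singleton S
    · unfold coverNum
      refine le_iSup_of_le (fun _ : Fin m => (0 : ℝ)) (le_sInf ?_)
      rintro _ ⟨C, ⟨-, hC⟩, rfl⟩
      obtain ⟨c, hc, -⟩ := hC _ hid
      exact Set.one_le_encard_iff_nonempty.2 ⟨c, hc⟩
  · refine iSup_le fun S => le_trans (sInf_le ⟨_, ⟨?_, ?_⟩, rfl⟩)
      (encard_threshold_restriction_le S)
    · rintro _ ⟨a, rfl⟩
      exact ⟨_, ⟨a, rfl⟩, rfl⟩
    · rintro _ ⟨a, rfl⟩
      exact ⟨_, ⟨a, rfl⟩, dInfReal_le hε'.le fun k => by simpa using hε'.le⟩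
  · obtain ⟨S, hS⟩ := exists_sample_shattered m (half_pos hε')
    unfold coverNum
    refine le_iSup_of_le S (le_sInf ?_)
    rintro _ ⟨C, ⟨hCsub, hC⟩, rfl⟩
    let χ : Finset (Fin m) → Fin m → ℝ := fun T k => if k ∈ T then 1 else 0
    have hχ : Function.Injective χ := by
      intro T U hTU
      ext k
      have := congrFun hTU k
      by_cases hT : k ∈ T <;> by_cases hU : k ∈ U <;> simp_all [χ]
    have hrange : Set.range χ ⊆ C := by
      rintro _ ⟨T, rfl⟩
      obtain ⟨f, hf, hfT⟩ := hS T
      obtain ⟨c, hc, hdist⟩ := hC _ ⟨f, hf, _, ⟨0, rfl⟩, rfl⟩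
      obtain ⟨_, ⟨f', -, _, ⟨b, rfl⟩, rfl⟩, hcv⟩ := hCsub hc
      suffices χ T = c by rwa [this]
      funext k
      have hk := (abs_sub_le_dInfReal _ _ k).trans hdist
      -- Both coordinates lie in `{0, 1}` and differ by at most `ε < 1`.
      rw [hcv] at hk ⊢
      simp only [Function.comp_apply, hfT] at hk
      simp only [Function.comp_apply, χ]
      split_ifs at hk ⊢ <;> first | rfl | (norm_num at hk; linarith)
    calc ((2 ^ m : ℕ) : ℕ∞) = (Set.range χ).encard := by
          rw [← Set.image_univ, hχ.encard_image, Set.encard_univ, ENat.card_eq_coe_fintype_card,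
            Fintype.card_finset, Fintype.card_fin]
      _ ≤ C.encard := Set.encard_le_encard hrange
end

section
/- Let F be a class of Borel functions from ℝ^d to ℝ^p, σ>0, ε>0, B>0. If C ⊆ F is such that for every f∈F there is f̂∈C with sup_{x∈ℝ^d} ‖f(x) − f̂(x)‖₂ ≤ ε (a global ε-cover of F in ‖·‖₂), then for every f∈F there is f̂∈C such that for every probability measure μ on ℝ^d supported on [−B,B]^d, d_TV((μ.map f) ∗ γ_{σ,p}, (μ.map f̂) ∗ γ_{σ,p}) ≤ ε/(2σ), where μ.map f denotes the pushforward of μ under f. -/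
/-!
The heart of the matter is the bound `TV(N(a, σ²I), N(b, σ²I)) ≤ ‖a - b‖₂ / (2σ)`, proved through
the Bhattacharyya coefficient. If `φ_a` is the density of `N(a, σ²I)` and `m = (a + b) / 2`, the
parallelogram law gives `φ_a φ_b = c² φ_m²` with `c = exp (-‖a - b‖² / (8σ²))`
(`gaussDens_mul_gaussDens`). Cauchy–Schwarz on a set `A` and on its complement therefore bounds
`c · N(m, σ²I)(A)` and `c · N(m, σ²I)(Aᶜ)` by `√(x y)` and `√((1 - x) (1 - y))`, where `x` and `y`
are the masses that `N(a, σ²I)` and `N(b, σ²I)` give to `A`. Adding the two,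
`c ≤ √(x y) + √((1 - x) (1 - y))`, which forces `(x - y)² ≤ 1 - c²`
(`sq_sub_le_of_two_cell`); and `1 - c² ≤ ‖a - b‖² / (4σ²)` because `1 - exp (-t) ≤ t`.

For the pushforwards, `(μ.map f) ∗ γ` is the mixture over `x ∼ μ` of the Gaussians centred at
`f x`, so the pointwise bound integrates to the same bound. The cover element of `f` works
for every `μ` at once because the hypothesis is uniform in `x`.
-/

open MeasureTheory ProbabilityTheory Real

/-- Total variation distance between two measures. -/
noncomputable def dTV {α : Type*} [MeasurableSpace α] (μ ν : Measure α) : ℝ :=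
  ⨆ A : {A : Set α // MeasurableSet A}, |(μ A).toReal - (ν A).toReal|

/-- Gaussian measure `N(m, σ²I_q)` on `Fin q → ℝ`. -/
noncomputable def gauss (q : ℕ) (m : Fin q → ℝ) (σ : ℝ) : Measure (Fin q → ℝ) :=
  Measure.pi fun i => gaussianReal (m i) (σ ^ 2).toNNReal

/-! ### Two elementary inequalities -/

/-- Cauchy–Schwarz for integrals in the form `h² = f g ⟹ (∫ h)² ≤ ∫ f ∫ g`, obtained from the
discriminant of the nonnegative quadratic `t ↦ ∫ (f t² - 2 h t + g)`. -/
lemma sq_integral_le_of_sq_eq {α : Type*} [MeasurableSpace α] (μ : Measure α) {f g h : α → ℝ}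
    (hf : Integrable f μ) (hg : Integrable g μ) (hh : Integrable h μ)
    (hf0 : ∀ x, 0 < f x) (hfg : ∀ x, h x ^ 2 = f x * g x) :
    (∫ x, h x ∂μ) ^ 2 ≤ (∫ x, f x ∂μ) * ∫ x, g x ∂μ := by
  have key : ∀ t : ℝ,
      0 ≤ (∫ x, f x ∂μ) * (t * t) + (-2 * ∫ x, h x ∂μ) * t + ∫ x, g x ∂μ := by
    intro t
    have h1 : ∫ x, (f x * (t * t) + (-2 * h x) * t + g x) ∂μ
        = (∫ x, f x ∂μ) * (t * t) + (-2 * ∫ x, h x ∂μ) * t + ∫ x, g x ∂μ := by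
      have i1 : Integrable (fun x => f x * (t * t) + (-2 * h x) * t) μ :=
        (hf.mul_const _).add ((hh.const_mul _).mul_const _)
      rw [integral_add i1 hg, integral_add (hf.mul_const _) ((hh.const_mul _).mul_const _), integral_mul_const,
        integral_mul_const, integral_const_mul]
    rw [← h1]
    refine integral_nonneg fun x => ?_
    have h2 : f x * (f x * (t * t) + (-2 * h x) * t + g x) = (f x * t - h x) ^ 2 := by
      linear_combination -(hfg x)
    have h3 : 0 ≤ f x * (f x * (t * t) + (-2 * h x) * t + g x) := h2 ▸ sq_nonneg _
    exact nonneg_of_mul_nonneg_right h3 (hf0 x)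
  have := discrim_le_zero key
  unfold discrim at this
  linarith

/-- Total variation against Bhattacharyya coefficient for two-point distributions
`(x, 1 - x)` and `(y, 1 - y)`. -/
lemma sq_sub_le_of_two_cell {x y u v : ℝ} (hx0 : 0 ≤ x) (hx1 : x ≤ 1) (hy0 : 0 ≤ y) (hy1 : y ≤ 1)
    (hu : u ^ 2 ≤ x * y) (hv : v ^ 2 ≤ (1 - x) * (1 - y)) :
    (x - y) ^ 2 ≤ 1 - (u + v) ^ 2 := by
  have hX : 0 ≤ x * (1 - x) := mul_nonneg hx0 (by linarith)
  have hY : 0 ≤ y * (1 - y) := mul_nonneg hy0 (by linarith)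
  have h1 : u ^ 2 * v ^ 2 ≤ (x * y) * ((1 - x) * (1 - y)) :=
    mul_le_mul hu hv (sq_nonneg _) (mul_nonneg hx0 hy0)
  -- the arithmetic-geometric mean inequality for `x (1 - x)` and `y (1 - y)`
  have h2 : 2 * (u * v) ≤ x * (1 - x) + y * (1 - y) := by
    refine abs_le_of_sq_le_sq' ?_ (by linarith) |>.2
    nlinarith [sq_nonneg (x * (1 - x) - y * (1 - y))]
  nlinarith

/-! ### The Gaussian density and its translates -/

/-- The Lebesgue density of `N(m, σ²I_q)`, as a product of one-dimensional densities. -/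
noncomputable def gaussDens (q : ℕ) (m : Fin q → ℝ) (σ : ℝ) (x : Fin q → ℝ) : ℝ :=
  ∏ i, gaussianPDFReal (m i) (σ ^ 2).toNNReal (x i)

lemma var_ne_zero {σ : ℝ} (hσ : 0 < σ) : (σ ^ 2).toNNReal ≠ 0 :=
  (Real.toNNReal_pos.2 (by positivity)).ne'

lemma gaussDens_pos (q : ℕ) (m : Fin q → ℝ) {σ : ℝ} (hσ : 0 < σ) (x : Fin q → ℝ) :
    0 < gaussDens q m σ x :=
  Finset.prod_pos fun _ _ => gaussianPDFReal_pos _ _ _ (var_ne_zero hσ)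

lemma integrable_gaussDens (q : ℕ) (m : Fin q → ℝ) (σ : ℝ) :
    Integrable (gaussDens q m σ) := by
  unfold gaussDens
  exact Integrable.fintype_prod_dep
    (f := fun i y => gaussianPDFReal (m i) (σ ^ 2).toNNReal y)
    fun i => integrable_gaussianPDFReal _ _

lemma gauss_eq_withDensity (q : ℕ) (m : Fin q → ℝ) {σ : ℝ} (hσ : 0 < σ) :
    gauss q m σ = volume.withDensity fun x => ENNReal.ofReal (gaussDens q m σ x) := by
  refine Measure.pi_eq fun s hs => ?_
  rw [withDensity_apply _ (MeasurableSet.univ_pi hs),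
    ← ofReal_integral_eq_lintegral_ofReal (integrable_gaussDens q m σ).restrict
      (ae_of_all _ fun x => (gaussDens_pos q m hσ x).le),
    volume_pi, Measure.restrict_pi_pi]
  unfold gaussDens
  rw [integral_fintype_prod_eq_prod (fun i y => gaussianPDFReal (m i) (σ ^ 2).toNNReal y),
    ENNReal.ofReal_prod_of_nonneg
      (fun i _ => integral_nonneg fun y => gaussianPDFReal_nonneg _ _ _)]
  exact Finset.prod_congr rfl fun i _ =>
    (gaussianReal_apply_eq_integral _ (var_ne_zero hσ) _).symm

instance isProbabilityMeasure_gauss (q : ℕ) (m : Fin q → ℝ) (σ : ℝ) :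
    IsProbabilityMeasure (gauss q m σ) := by
  unfold gauss; infer_instance

lemma gauss_real_apply (q : ℕ) (m : Fin q → ℝ) {σ : ℝ} (hσ : 0 < σ) {A : Set (Fin q → ℝ)}
    (hA : MeasurableSet A) : (gauss q m σ).real A = ∫ x in A, gaussDens q m σ x := by
  rw [measureReal_def, gauss_eq_withDensity q m hσ, withDensity_apply _ hA,
    ← ofReal_integral_eq_lintegral_ofReal (integrable_gaussDens q m σ).restrict
      (ae_of_all _ fun x => (gaussDens_pos q m hσ x).le),
    ENNReal.toReal_ofReal (integral_nonneg fun x => (gaussDens_pos q m hσ x).le)]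

/-- The geometric mean of two Gaussian densities is the density at the midpoint, scaled by their
Bhattacharyya coefficient (here squared). -/
lemma gaussDens_mul_gaussDens (q : ℕ) (a b : Fin q → ℝ) {σ : ℝ} (hσ : 0 < σ) (x : Fin q → ℝ) :
    (exp (-(∑ i, (a i - b i) ^ 2) / (8 * σ ^ 2)) *
        gaussDens q (fun i => (a i + b i) / 2) σ x) ^ 2
      = gaussDens q a σ x * gaussDens q b σ x := by
  unfold gaussDens
  rw [neg_div, Finset.sum_div, ← Finset.sum_neg_distrib, exp_sum, ← Finset.prod_mul_distrib,
    ← Finset.prod_mul_distrib, ← Finset.prod_pow]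
  refine Finset.prod_congr rfl fun i _ => ?_
  have hv : ((σ ^ 2).toNNReal : ℝ) = σ ^ 2 := Real.coe_toNNReal _ (by positivity)
  simp only [gaussianPDFReal, hv]
  generalize (√(2 * π * σ ^ 2))⁻¹ = K
  have e1 : ∀ r s : ℝ, (exp r * (K * exp s)) ^ 2 = K ^ 2 * exp (r + s + (r + s)) := by
    intro r s; simp only [exp_add]; ring
  have e2 : ∀ r s : ℝ, K * exp r * (K * exp s) = K ^ 2 * exp (r + s) := by
    intro r s; simp only [exp_add]; ring
  rw [e1, e2]
  congr 2
  field_simp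
  ring

/-! ### Total variation between two Gaussians -/

lemma abs_gauss_sub_le (q : ℕ) (a b : Fin q → ℝ) {σ : ℝ} (hσ : 0 < σ) {A : Set (Fin q → ℝ)}
    (hA : MeasurableSet A) :
    |(gauss q a σ).real A - (gauss q b σ).real A| ≤ norm2 (a - b) / (2 * σ) := by
  set S : ℝ := ∑ i, (a i - b i) ^ 2 with hS
  have hS0 : 0 ≤ S := Finset.sum_nonneg fun i _ => sq_nonneg _
  set c : ℝ := exp (-S / (8 * σ ^ 2)) with hc
  set m : Fin q → ℝ := fun i => (a i + b i) / 2 with hm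
  have key : ∀ E : Set (Fin q → ℝ), MeasurableSet E →
      (c * (gauss q m σ).real E) ^ 2 ≤ (gauss q a σ).real E * (gauss q b σ).real E := by
    intro E hE
    rw [gauss_real_apply q _ hσ hE, gauss_real_apply q _ hσ hE, gauss_real_apply q _ hσ hE,
      ← integral_const_mul]
    exact sq_integral_le_of_sq_eq _ (integrable_gaussDens q a σ).restrict
      (integrable_gaussDens q b σ).restrict ((integrable_gaussDens q m σ).restrict.const_mul c)
      (gaussDens_pos q a hσ) (gaussDens_mul_gaussDens q a b hσ)
  have h1 := key A hA
  have h2 := key Aᶜ hA.compl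
  rw [probReal_compl_eq_one_sub hA, probReal_compl_eq_one_sub hA,
    probReal_compl_eq_one_sub hA] at h2
  have h3 := sq_sub_le_of_two_cell measureReal_nonneg measureReal_le_one measureReal_nonneg
    measureReal_le_one h1 h2
  have h4 : c * (gauss q m σ).real A + c * (1 - (gauss q m σ).real A) = c := by ring
  rw [h4] at h3
  have h5 : c ^ 2 = exp (-(S / (4 * σ ^ 2))) := by
    rw [hc, sq, ← exp_add]; congr 1; field_simp; ring
  have h6 : 1 - S / (4 * σ ^ 2) ≤ c ^ 2 := h5 ▸ one_sub_le_exp_neg _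
  have h7 : norm2 (a - b) ^ 2 = S := by
    simp only [norm2, Pi.sub_apply]
    exact Real.sq_sqrt hS0
  have h8 : 0 ≤ norm2 (a - b) := Real.sqrt_nonneg _
  refine abs_le_of_sq_le_sq ?_ (by positivity)
  rw [div_pow, h7, mul_pow]
  linarith

/-! ### Gaussian mixtures -/

lemma gauss_zero_map_add (q : ℕ) (a : Fin q → ℝ) (σ : ℝ) :
    (gauss q 0 σ).map (fun y => a + y) = gauss q a σ := by
  unfold gauss
  have h := Measure.pi_map_pi (μ := fun i : Fin q => gaussianReal ((0 : Fin q → ℝ) i)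
    (σ ^ 2).toNNReal) (f := fun i y => a i + y) (fun i => by fun_prop)
  simp only [gaussianReal_map_const_add, Pi.zero_apply, zero_add] at h
  exact h

lemma measurable_gauss_apply (q : ℕ) (σ : ℝ) {A : Set (Fin q → ℝ)} (hA : MeasurableSet A) :
    Measurable fun a => gauss q a σ A := by
  have h : (fun a => gauss q a σ A)
      = fun a => gauss q 0 σ (Prod.mk a ⁻¹' ((fun z : _ × _ => z.1 + z.2) ⁻¹' A)) := by
    funext a
    rw [← gauss_zero_map_add, Measure.map_apply (by fun_prop) hA]
    rfl
  rw [h]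
  exact measurable_measure_prodMk_left ((measurable_fst.add measurable_snd) hA)

/-- `(μ.map f) ∗ N(0, σ²I)` is the mixture over `μ` of the measures `N(f x, σ²I)`. -/
lemma conv_gauss_real_apply {d q : ℕ} (μ : Measure (Fin d → ℝ)) [IsProbabilityMeasure μ]
    {f : (Fin d → ℝ) → (Fin q → ℝ)} (hf : Measurable f) (σ : ℝ) {A : Set (Fin q → ℝ)}
    (hA : MeasurableSet A) :
    ((μ.map f).conv (gauss q 0 σ)).real A = ∫ x, (gauss q (f x) σ).real A ∂μ := by
  have h1 : (μ.map f).conv (gauss q 0 σ) A = ∫⁻ x, gauss q (f x) σ A ∂μ := by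
    rw [← lintegral_indicator_one hA, Measure.lintegral_conv (measurable_one.indicator hA),
      ← lintegral_map (measurable_gauss_apply q σ hA) hf]
    refine lintegral_congr fun a => ?_
    rw [← gauss_zero_map_add q a, ← lintegral_indicator_one hA,
      lintegral_map (measurable_one.indicator hA) (by fun_prop)]
  rw [measureReal_def, h1]
  exact (integral_toReal ((measurable_gauss_apply q σ hA).comp hf).aemeasurable
    (ae_of_all _ fun x => measure_lt_top _ _)).symm

lemma integrable_gauss_real {d q : ℕ} (μ : Measure (Fin d → ℝ)) [IsProbabilityMeasure μ]
    {f : (Fin d → ℝ) → (Fin q → ℝ)} (hf : Measurable f) (σ : ℝ) {A : Set (Fin q → ℝ)}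
    (hA : MeasurableSet A) : Integrable (fun x => (gauss q (f x) σ).real A) μ := by
  refine Integrable.of_bound (C := 1)
    ((measurable_gauss_apply q σ hA).comp hf).ennreal_toReal.aestronglyMeasurable
    (ae_of_all _ fun x => ?_)
  rw [Real.norm_of_nonneg measureReal_nonneg]
  exact measureReal_le_one


/-- A global `‖·‖₂`-cover `C` of a class `F` of Borel functions turns
into a global TV cover at scale `ε/(2σ)` for the noisy pushforwards: for every `f ∈ F`
there is `f' ∈ C` with `d_TV((μ.map f) ∗ γ_{σ,p}, (μ.map f') ∗ γ_{σ,p}) ≤ ε/(2σ)` for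
every probability measure `μ` supported on `[−B,B]^d`. -/
theorem global_l2_cover_to_global_tv_cover (d p : ℕ) (σ ε B : ℝ)
    (hσ : 0 < σ) (hε : 0 < ε) (hB : 0 < B)
    (F : Set ((Fin d → ℝ) → (Fin p → ℝ))) (hF : ∀ f ∈ F, Measurable f)
    (C : Set ((Fin d → ℝ) → (Fin p → ℝ))) (hC : C ⊆ F)
    (hcover : ∀ f ∈ F, ∃ f' ∈ C, ∀ x, norm2 (f x - f' x) ≤ ε) :
    ∀ f ∈ F, ∃ f' ∈ C,
      ∀ μ : Measure (Fin d → ℝ), IsProbabilityMeasure μ →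
        μ {x | ¬ ∀ i, x i ∈ Set.Icc (-B) B} = 0 →
        dTV ((μ.map f).conv (gauss p 0 σ)) ((μ.map f').conv (gauss p 0 σ))
          ≤ ε / (2 * σ) := by
  intro f hf
  obtain ⟨f', hf', hd⟩ := hcover f hf
  refine ⟨f', hf', fun μ hμ _ => Real.iSup_le ?_ (by positivity)⟩
  rintro ⟨A, hA⟩
  have hm := hF f hf
  have hm' := hF f' (hC hf')
  change |((μ.map f).conv (gauss p 0 σ)).real A - ((μ.map f').conv (gauss p 0 σ)).real A| ≤ _
  rw [conv_gauss_real_apply μ hm σ hA, conv_gauss_real_apply μ hm' σ hA,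
    ← integral_sub (integrable_gauss_real μ hm σ hA) (integrable_gauss_real μ hm' σ hA),
    ← Real.norm_eq_abs]
  have h := norm_integral_le_of_norm_le_const (μ := μ)
    (f := fun x => (gauss p (f x) σ).real A - (gauss p (f' x) σ).real A) (C := ε / (2 * σ))
    (ae_of_all _ fun x => by
      rw [Real.norm_eq_abs]
      exact (abs_gauss_sub_le p (f x) (f' x) hσ hA).trans (by gcongr; exact hd x))
  simpa using h
end

section
/- Let d∈ℕ, σ>0 and μ₁, μ₂ ∈ ℝ^d. Then the total variation distance between the Gaussian measures N(μ₁, σ²I_d) and N(μ₂, σ²I_d) on ℝ^d satisfies d_TV(N(μ₁,σ²I_d), N(μ₂,σ²I_d)) ≤ ‖μ₁ − μ₂‖₂ / (2σ). -/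
/-!
The bound is Pinsker's inequality `2 · d_TV(Q, P)² ≤ KL(Q ‖ P)` combined with the value
`KL(N(μ₁, σ²I) ‖ N(μ₂, σ²I)) = ‖μ₁ - μ₂‖² / (2σ²)`.

Pinsker's inequality (`two_mul_sq_le_integral`) is obtained by duality. Write `P = e^{-L} Q`, so that
`KL(Q ‖ P) = ∫ L dQ`. Jensen's inequality gives `∫ e^g dP = ∫ e^{g - L} dQ ≥ exp (∫ g dQ - ∫ L dQ)`
for bounded `g`, and for `g = t (1_A - P(A))` the left-hand side is at most `e^{t²/8}` by Hoeffding's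
lemma. Hence `t (Q(A) - P(A)) - t²/8 ≤ KL(Q ‖ P)` for all `t`, and `t = 4 (Q(A) - P(A))` is optimal.

For the Gaussians, `L` is a sum over the coordinates of affine functions, because the density of a
product measure is the product of the densities (`pi_eq_withDensity_prod`), so its integral only
involves the mean of a one-dimensional Gaussian.
-/

open MeasureTheory ProbabilityTheory Real

/-- Pinsker's inequality on a single event: `L` is the log-likelihood ratio `log (dQ/dP)`, so the
right-hand side is the relative entropy of `Q` with respect to `P`. -/
lemma two_mul_sq_le_integral {α : Type*} [MeasurableSpace α] {P Q : Measure α}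
    [IsProbabilityMeasure P] [IsProbabilityMeasure Q] {L : α → ℝ} (hLm : Measurable L)
    (hP : P = Q.withDensity fun x => ENNReal.ofReal (exp (-L x))) (hL : Integrable L Q)
    {A : Set α} (hA : MeasurableSet A) :
    2 * (Q.real A - P.real A) ^ 2 ≤ ∫ x, L x ∂Q := by
  set f : α → ℝ := A.indicator 1 with hf
  have hfm : Measurable f := measurable_one.indicator hA
  have hf01 : ∀ x, f x ∈ Set.Icc (0 : ℝ) 1 := fun x => by
    by_cases hx : x ∈ A <;> simp [hf, hx]
  have hfP : ∫ x, f x ∂P = P.real A := integral_indicator_one hA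
  have hfQ : ∫ x, f x ∂Q = Q.real A := integral_indicator_one hA
  have hfQi : Integrable f Q :=
    Integrable.of_mem_Icc 0 1 hfm.aemeasurable (ae_of_all _ hf01)
  have hoeffding := hasSubgaussianMGF_of_mem_Icc (μ := P) hfm.aemeasurable (ae_of_all _ hf01)
  rw [hfP] at hoeffding
  set t : ℝ := 4 * (Q.real A - P.real A) with ht
  have hupper := hoeffding.mgf_le t
  have hint := hoeffding.integrable_exp_mul t
  have hdm : Measurable fun x => ENNReal.ofReal (exp (-L x)) := by fun_prop
  have hchange : ∀ x, (ENNReal.ofReal (exp (-L x))).toReal • exp (t * (f x - P.real A))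
      = exp (t * (f x - P.real A) - L x) := fun x => by
    rw [ENNReal.toReal_ofReal (exp_pos _).le, smul_eq_mul, ← exp_add]
    ring_nf
  have hmgf : mgf (fun x => f x - P.real A) P t = ∫ x, exp (t * (f x - P.real A) - L x) ∂Q := by
    unfold mgf
    -- `P.real A` is a constant here: rewriting by `hP` must only change the integrating measure.
    generalize P.real A = p at *
    rw [hP, integral_withDensity_eq_integral_toReal_smul hdm (ae_of_all _ fun _ => by simp)]
    simp only [hchange]
  have hintQ : Integrable (fun x => exp (t * (f x - P.real A) - L x)) Q := by
    generalize P.real A = p at *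
    rw [hP, integrable_withDensity_iff_integrable_smul' hdm (ae_of_all _ fun _ => by simp)] at hint
    simpa only [hchange] using hint
  have hgi : Integrable (fun x => t * (f x - P.real A)) Q :=
    (hfQi.sub (integrable_const _)).const_mul t
  have hjensen := convexOn_exp.map_integral_le (μ := Q) continuous_exp.continuousOn isClosed_univ
    (ae_of_all _ fun _ => Set.mem_univ _) (hgi.sub hL) hintQ
  have hval : ∫ x, (t * (f x - P.real A) - L x) ∂Q
      = t * (Q.real A - P.real A) - ∫ x, L x ∂Q := by
    rw [integral_sub hgi hL, integral_const_mul, integral_sub hfQi (integrable_const _), hfQ]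
    simp
  rw [hmgf] at hupper
  have hle := exp_le_exp.mp ((hjensen.trans hupper))
  simp only [Pi.sub_apply] at hle
  rw [hval] at hle
  -- The Hoeffding constant is `(1 / 2) ^ 2`, so this reads `t (Q A - P A) - ∫ L ∂Q ≤ t ^ 2 / 8`.
  norm_num at hle
  rw [ht] at hle
  nlinarith [hle]

lemma gaussianReal_eq_withDensity (m m' : ℝ) {v : NNReal} (hv : v ≠ 0) :
    gaussianReal m' v = (gaussianReal m v).withDensity
      fun x => ENNReal.ofReal (exp (-(((x - m') ^ 2 - (x - m) ^ 2) / (2 * v)))) := by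
  rw [gaussianReal_of_var_ne_zero _ hv, gaussianReal_of_var_ne_zero _ hv,
    ← withDensity_mul _ (measurable_gaussianPDF _ _) (by fun_prop)]
  congr 1
  ext x
  rw [Pi.mul_apply, gaussianPDF, gaussianPDF, ← ENNReal.ofReal_mul (gaussianPDFReal_nonneg _ _ _),
    gaussianPDFReal, gaussianPDFReal, mul_assoc (√_)⁻¹, ← exp_add]
  congr 3
  ring

/-- The density of a product measure is the product of the densities of the factors. -/
lemma pi_eq_withDensity_prod {ι : Type*} [Fintype ι] {X : ι → Type*} [∀ i, MeasurableSpace (X i)]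
    {P Q : ∀ i, Measure (X i)} [∀ i, IsProbabilityMeasure (P i)] [∀ i, IsProbabilityMeasure (Q i)]
    {f : ∀ i, X i → ENNReal} (hf : ∀ i, Measurable (f i)) (h : ∀ i, P i = (Q i).withDensity (f i)) :
    Measure.pi P = (Measure.pi Q).withDensity fun x => ∏ i, f i (x i) := by
  refine Measure.pi_eq fun s hs => ?_
  have hm : ∀ i, Measurable ((s i).indicator (f i)) := fun i => (hf i).indicator (hs i)
  have hind : (Set.univ.pi s).indicator (fun x => ∏ i, f i (x i))
      = fun x => ∏ i, (s i).indicator (f i) (x i) := by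
    ext x
    by_cases hx : x ∈ Set.univ.pi s
    · rw [Set.indicator_of_mem hx]
      exact Finset.prod_congr rfl fun i _ => (Set.indicator_of_mem (hx i trivial) _).symm
    · rw [Set.indicator_of_notMem hx]
      obtain ⟨i, hi⟩ : ∃ i, x i ∉ s i := by simpa using hx
      exact (Finset.prod_eq_zero (Finset.mem_univ i) (Set.indicator_of_notMem hi _)).symm
  rw [withDensity_apply _ (MeasurableSet.univ_pi hs),
    ← lintegral_indicator (MeasurableSet.univ_pi hs), hind,
    lintegral_prod_eq_prod_lintegral_of_indepFun Finset.univ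
      (fun i (x : ∀ i, X i) => (s i).indicator (f i) (x i))
      (iIndepFun_pi fun i => (hm i).aemeasurable)
      fun i => (hm i).comp (measurable_pi_apply i)]
  refine Finset.prod_congr rfl fun i _ => ?_
  rw [(measurePreserving_eval Q i).lintegral_comp (hm i), lintegral_indicator (hs i), h i,
    withDensity_apply _ (hs i)]

/-- The one-dimensional log-likelihood ratio between two Gaussians of the same variance is
integrable, and its mean is the relative entropy. -/
lemma integrable_and_integral_llr (m m' : ℝ) (v : NNReal) :
    Integrable (fun x => ((x - m') ^ 2 - (x - m) ^ 2) / (2 * v)) (gaussianReal m v) ∧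
    ∫ x, ((x - m') ^ 2 - (x - m) ^ 2) / (2 * v) ∂gaussianReal m v = (m - m') ^ 2 / (2 * v) := by
  have hid : Integrable (fun x : ℝ => x) (gaussianReal m v) :=
    (memLp_id_gaussianReal 1).integrable (by simp)
  have haff : (fun x : ℝ => ((x - m') ^ 2 - (x - m) ^ 2) / (2 * v))
      = fun x => (2 * (m - m') * x + (m' ^ 2 - m ^ 2)) / (2 * v) := by
    ext x
    ring
  have hi := hid.const_mul (2 * (m - m'))
  rw [haff]
  refine ⟨(hi.add (integrable_const _)).div_const _, ?_⟩
  rw [integral_div, integral_add hi (integrable_const _), integral_const_mul,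
    integral_id_gaussianReal]
  simp only [integral_const, probReal_univ, one_smul]
  ring

/-- The total variation distance between two Gaussians with the same
covariance `σ²I_d` satisfies `d_TV(N(μ₁,σ²I_d), N(μ₂,σ²I_d)) ≤ ‖μ₁ − μ₂‖₂/(2σ)`. -/
theorem tv_gaussians_same_cov (d : ℕ) (σ : ℝ) (hσ : 0 < σ) (μ₁ μ₂ : Fin d → ℝ) :
    dTV (gauss d μ₁ σ) (gauss d μ₂ σ) ≤ norm2 (μ₁ - μ₂) / (2 * σ) := by
  have : ∀ m, IsProbabilityMeasure (gauss d m σ) := fun m => by unfold gauss; infer_instance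
  have hvpos : 0 < σ ^ 2 := by positivity
  have hv : (σ ^ 2).toNNReal ≠ 0 := by simpa using hσ.ne'
  have hvc : (((σ ^ 2).toNNReal : NNReal) : ℝ) = σ ^ 2 := Real.coe_toNNReal _ hvpos.le
  set ℓ : Fin d → ℝ → ℝ := fun i x => ((x - μ₂ i) ^ 2 - (x - μ₁ i) ^ 2) / (2 * σ ^ 2) with hℓ
  have hℓi : ∀ i, Integrable (fun x : Fin d → ℝ => ℓ i (x i)) (gauss d μ₁ σ) := fun i => by
    have h := (integrable_and_integral_llr (μ₁ i) (μ₂ i) (σ ^ 2).toNNReal).1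
    rw [hvc] at h
    exact integrable_comp_eval (μ := fun i => gaussianReal (μ₁ i) (σ ^ 2).toNNReal) h
  have hℓv : ∀ i, ∫ x, ℓ i (x i) ∂gauss d μ₁ σ = (μ₁ i - μ₂ i) ^ 2 / (2 * σ ^ 2) := fun i => by
    have h := integrable_and_integral_llr (μ₁ i) (μ₂ i) (σ ^ 2).toNNReal
    rw [hvc] at h
    rw [← h.2]
    exact integral_comp_eval (μ := fun i => gaussianReal (μ₁ i) (σ ^ 2).toNNReal)
      h.1.aestronglyMeasurable
  have hdens : gauss d μ₂ σ = (gauss d μ₁ σ).withDensity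
      fun x => ENNReal.ofReal (exp (-∑ i, ℓ i (x i))) := by
    unfold gauss
    rw [pi_eq_withDensity_prod (f := fun i x => ENNReal.ofReal (exp (-ℓ i x)))
      (fun i => by simp only [hℓ]; fun_prop)
      fun i => by rw [gaussianReal_eq_withDensity (μ₁ i) (μ₂ i) hv, hvc]]
    congr 1
    ext x
    rw [← ENNReal.ofReal_prod_of_nonneg fun i _ => (exp_pos _).le, ← exp_sum,
      Finset.sum_neg_distrib]
  have : Nonempty {A : Set (Fin d → ℝ) // MeasurableSet A} := ⟨⟨∅, .empty⟩⟩
  refine ciSup_le ?_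
  rintro ⟨A, hA⟩
  have hpinsker := two_mul_sq_le_integral (by simp only [hℓ]; fun_prop) hdens
    (integrable_finsetSum _ fun i _ => hℓi i) hA
  rw [integral_finsetSum _ fun i _ => hℓi i, Finset.sum_congr rfl fun i _ => hℓv i,
    ← Finset.sum_div, le_div_iff₀ (by positivity)] at hpinsker
  rw [le_div_iff₀ (by positivity)]
  refine Real.le_sqrt_of_sq_le ?_
  rw [mul_pow, sq_abs]
  simp only [Pi.sub_apply]
  change ((gauss d μ₁ σ).real A - (gauss d μ₂ σ).real A) ^ 2 * (2 * σ) ^ 2 ≤ _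
  linarith
end

section
/- Let f be a probability density function on ℝ^d supported on [−B,B]^d, let g be the density of the Gaussian N(0,σ²I_d), and let n∈ℕ. For i.i.d. samples x₁,…,x_n drawn from the density f, the expected L¹ distance between the Gaussian kernel density estimate and the smoothed density satisfies E[ ∫_{ℝ^d} | (1/n)·Σ_{i=1}^n g(x − xᵢ) − (f ∗ g)(x) | dx ] ≤ (2/√n) · (2B/√(2πσ²) + 1)^d, where the expectation is over the n-fold product of the measure with density f and (f ∗ g)(x) = ∫ f(y)·g(x−y) dy. -/
/-! Write `ν` for the law with density `f`. For fixed `x` the estimate is the empirical mean of the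
i.i.d. variables `g (x - xᵢ)`, whose expectation is `(f ∗ g) x`. Since `xᵢ` lies almost surely in the
box `[-B, B]^d`, these variables take values in `[0, G x]`, where `G` is the pointwise supremum of the
translates of `g` by points of the box (`gaussDensity_sub_le`). An average of `n` such variables has
variance at most `(G x)² / (4n)`, so its expected absolute deviation is at most `G x / √n`
(`integral_abs_mean_sub_le`).

The envelope `G` is a product of one-dimensional envelopes, each constant on `[-B, B]` with two
Gaussian tails outside, so that `∫ G = (2B / √(2πσ²) + 1)^d` (`integral_boxEnvelope`,
`integral_boxEnvelope_prod`). The same envelope dominates the integrand, which justifies exchanging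
the expectation with the integral in `x`; integrating the pointwise bound gives the claim, with a
factor `2` to spare. -/

open MeasureTheory Real

/-- The density of the Gaussian `N(0, σ²I_d)` on `Fin d → ℝ`. -/
noncomputable def gaussDensity (d : ℕ) (σ : ℝ) (x : Fin d → ℝ) : ℝ :=
  (2 * Real.pi * σ ^ 2) ^ (-(d : ℝ) / 2) * Real.exp (-(∑ i, (x i) ^ 2) / (2 * σ ^ 2))

/-- The supremum over `y ∈ [-B, B]` of the one-dimensional Gaussian density at `t - y`, written
through the distance `max (|t| - B) 0` from `t` to `[-B, B]`. -/
noncomputable def boxEnvelope (B σ t : ℝ) : ℝ :=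
  (√(2 * π * σ ^ 2))⁻¹ * exp (-(max (|t| - B) 0) ^ 2 / (2 * σ ^ 2))

lemma boxEnvelope_nonneg (B σ t : ℝ) : 0 ≤ boxEnvelope B σ t := by
  unfold boxEnvelope; positivity

lemma integral_Ioi_tail (B : ℝ) {σ : ℝ} (hσ : 0 < σ) :
    IntegrableOn (fun t => (√(2 * π * σ ^ 2))⁻¹ * exp (-(t - B) ^ 2 / (2 * σ ^ 2))) (Set.Ioi B) ∧
    ∫ t in Set.Ioi B, (√(2 * π * σ ^ 2))⁻¹ * exp (-(t - B) ^ 2 / (2 * σ ^ 2)) = 1 / 2 := by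
  have key : ∫ t in Set.Ioi B, (√(2 * π * σ ^ 2))⁻¹ * exp (-(t - B) ^ 2 / (2 * σ ^ 2)) = 1 / 2 := by
    have h := (measurePreserving_sub_right volume B).setIntegral_preimage_emb
      (measurableEmbedding_subRight B)
      (fun t => (√(2 * π * σ ^ 2))⁻¹ * exp (-t ^ 2 / (2 * σ ^ 2))) (Set.Ioi 0)
    have hpre : (fun x => x - B) ⁻¹' Set.Ioi 0 = Set.Ioi B := by ext; simp
    rw [hpre] at h
    rw [h, integral_const_mul]
    have h2 : ∀ t : ℝ, -t ^ 2 / (2 * σ ^ 2) = -(1 / (2 * σ ^ 2)) * t ^ 2 := fun t => by ring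
    simp_rw [h2]
    rw [integral_gaussian_Ioi]
    have h3 : π / (1 / (2 * σ ^ 2)) = 2 * π * σ ^ 2 := by field_simp
    have h4 : 0 < √(2 * π * σ ^ 2) := by positivity
    rw [h3]
    field_simp
  refine ⟨?_, key⟩
  exact not_imp_comm.1 integral_undef (by rw [key]; norm_num)

lemma integral_boxEnvelope {B σ : ℝ} (hB : 0 < B) (hσ : 0 < σ) :
    ∫ t, boxEnvelope B σ t = 2 * B / √(2 * π * σ ^ 2) + 1 := by
  obtain ⟨hi, hv⟩ := integral_Ioi_tail B hσ
  -- `boxEnvelope` is even, so twice the integral over the positive half-line suffices.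
  have habs : ∫ t, boxEnvelope B σ t = 2 * ∫ t in Set.Ioi 0, boxEnvelope B σ t := by
    rw [← integral_comp_abs]
    simp [boxEnvelope]
  have e1 : Set.EqOn (fun _ => (√(2 * π * σ ^ 2))⁻¹) (boxEnvelope B σ) (Set.Ioc 0 B) := by
    intro t ht
    have : |t| - B ≤ 0 := by rw [abs_of_pos ht.1]; linarith [ht.2]
    simp [boxEnvelope, max_eq_right this]
  have e2 : Set.EqOn (fun t => (√(2 * π * σ ^ 2))⁻¹ * exp (-(t - B) ^ 2 / (2 * σ ^ 2)))
      (boxEnvelope B σ) (Set.Ioi B) := by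
    intro t ht
    have ht : B < t := ht
    have h0 : 0 ≤ |t| - B := by rw [abs_of_pos (hB.trans ht)]; linarith
    simp only [boxEnvelope, max_eq_left h0]
    rw [abs_of_pos (hB.trans ht)]
  have i1 : IntegrableOn (boxEnvelope B σ) (Set.Ioc 0 B) :=
    IntegrableOn.congr_fun (integrableOn_const (by simp)) e1 measurableSet_Ioc
  have i2 : IntegrableOn (boxEnvelope B σ) (Set.Ioi B) := hi.congr_fun e2 measurableSet_Ioi
  rw [habs, ← Set.Ioc_union_Ioi_eq_Ioi hB.le,
    setIntegral_union (Set.Ioc_disjoint_Ioi le_rfl) measurableSet_Ioi i1 i2,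
    ← setIntegral_congr_fun measurableSet_Ioc e1, ← setIntegral_congr_fun measurableSet_Ioi e2, hv]
  simp [hB.le]
  ring

lemma integrable_boxEnvelope {B σ : ℝ} (hB : 0 < B) (hσ : 0 < σ) :
    Integrable (boxEnvelope B σ) := by
  -- A nonzero Bochner integral certifies integrability.
  refine not_imp_comm.1 integral_undef ?_
  have := integral_boxEnvelope hB hσ
  have h2 : 0 < 2 * B / √(2 * π * σ ^ 2) + 1 := by positivity
  exact this ▸ h2.ne'

lemma integral_boxEnvelope_prod (d : ℕ) {B σ : ℝ} (hB : 0 < B) (hσ : 0 < σ) :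
    ∫ x : Fin d → ℝ, ∏ i, boxEnvelope B σ (x i) = (2 * B / √(2 * π * σ ^ 2) + 1) ^ d := by
  rw [integral_fintype_prod_volume_eq_prod (fun _ : Fin d => boxEnvelope B σ)]
  simp [integral_boxEnvelope hB hσ]

lemma integrable_boxEnvelope_prod (d : ℕ) {B σ : ℝ} (hB : 0 < B) (hσ : 0 < σ) :
    Integrable (fun x : Fin d → ℝ => ∏ i, boxEnvelope B σ (x i)) :=
  Integrable.fintype_prod (fun _ => integrable_boxEnvelope hB hσ)

lemma gaussDensity_eq_prod (d : ℕ) {σ : ℝ} (x : Fin d → ℝ) :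
    gaussDensity d σ x = ∏ i, (√(2 * π * σ ^ 2))⁻¹ * exp (-(x i) ^ 2 / (2 * σ ^ 2)) := by
  have h0 : 0 ≤ 2 * π * σ ^ 2 := by positivity
  rw [Finset.prod_mul_distrib, ← Real.exp_sum, gaussDensity]
  congr 1
  · rw [Finset.prod_const, Finset.card_univ, Fintype.card_fin, Real.sqrt_eq_rpow,
      ← Real.rpow_neg h0, ← Real.rpow_natCast _ d, ← Real.rpow_mul h0]
    congr 1
    ring
  · rw [← Finset.sum_div, Finset.sum_neg_distrib]

lemma gaussDensity_nonneg (d : ℕ) (σ : ℝ) (x : Fin d → ℝ) : 0 ≤ gaussDensity d σ x := by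
  unfold gaussDensity; positivity

@[fun_prop]
lemma continuous_gaussDensity (d : ℕ) (σ : ℝ) : Continuous (gaussDensity d σ) := by
  unfold gaussDensity; fun_prop

lemma gaussDensity_sub_le (d : ℕ) {B σ : ℝ} (x y : Fin d → ℝ)
    (hy : ∀ i, y i ∈ Set.Icc (-B) B) :
    gaussDensity d σ (x - y) ≤ ∏ i, boxEnvelope B σ (x i) := by
  rw [gaussDensity_eq_prod]
  refine Finset.prod_le_prod (fun i _ => by positivity) (fun i _ => ?_)
  unfold boxEnvelope
  have h1 : max (|x i| - B) 0 ≤ |x i - y i| := by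
    refine max_le ?_ (abs_nonneg _)
    have := abs_sub_abs_le_abs_sub (x i) (y i)
    have := abs_le.2 (hy i)
    linarith
  have h2 : (max (|x i| - B) 0) ^ 2 ≤ (x i - y i) ^ 2 := by
    rw [← sq_abs (x i - y i)]
    gcongr
  simp only [Pi.sub_apply]
  gcongr

/-- Expected absolute deviation of the empirical mean of `n` independent copies of a random variable
with values in `[0, G]`: by Jensen it is at most the standard deviation, and the variance of one
copy is at most `(G / 2)²` by Popoviciu's inequality. -/
lemma integral_abs_mean_sub_le {α : Type*} [MeasurableSpace α] (ν : Measure α)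
    [IsProbabilityMeasure ν] {n : ℕ} (hn : 0 < n) {φ : α → ℝ} (hφ : Measurable φ) {G : ℝ}
    (hG : 0 ≤ G) (hb : ∀ᵐ y ∂ν, φ y ∈ Set.Icc 0 G) :
    ∫ xs, |(1 / (n : ℝ)) * ∑ i, φ (xs i) - ∫ y, φ y ∂ν| ∂(Measure.pi fun _ : Fin n => ν)
      ≤ G / √n := by
  set P := Measure.pi fun _ : Fin n => ν
  have hLp : MemLp φ 2 ν := memLp_of_bounded hb hφ.aestronglyMeasurable 2
  have hmp : ∀ i : Fin n, MeasurePreserving (fun xs : Fin n → α => xs i) P ν :=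
    fun i => measurePreserving_eval (fun _ => ν) i
  have hLpi : ∀ i : Fin n, MemLp (fun xs : Fin n → α => φ (xs i)) 2 P :=
    fun i => hLp.comp_measurePreserving (hmp i)
  have hSLp : MemLp (fun xs : Fin n → α => ∑ i, φ (xs i)) 2 P :=
    memLp_finsetSum _ (fun i _ => hLpi i)
  set A : (Fin n → α) → ℝ := fun xs => (1 / (n : ℝ)) * ∑ i, φ (xs i) with hA
  have hALp : MemLp A 2 P := hSLp.const_mul _
  have hmean : ∫ xs, A xs ∂P = ∫ y, φ y ∂ν := by
    simp only [hA]
    rw [integral_const_mul, integral_finsetSum _ (fun i _ => (hLpi i).integrable one_le_two)]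
    have : ∀ i : Fin n, ∫ xs, φ (xs i) ∂P = ∫ y, φ y ∂ν := fun i => by
      rw [← (hmp i).map_eq, integral_map (hmp i).measurable.aemeasurable hφ.aestronglyMeasurable]
    simp_rw [this]
    simp
    field_simp
  have hvarφ : ProbabilityTheory.variance φ ν ≤ (G / 2) ^ 2 := by
    simpa using ProbabilityTheory.variance_le_sq_of_bounded hb hφ.aemeasurable
  have hvar : ProbabilityTheory.variance A P ≤ (1 / n) * (G / 2) ^ 2 := by
    have h := ProbabilityTheory.variance_sum_pi (μ := fun _ : Fin n => ν) (X := fun _ => φ)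
      (fun _ => hLp)
    have h' : (∑ i : Fin n, fun xs : Fin n → α => φ (xs i)) = fun xs => ∑ i, φ (xs i) := by
      ext; simp
    rw [h'] at h
    rw [hA, ProbabilityTheory.variance_const_mul, h]
    simp only [Finset.sum_const, Finset.card_univ, Fintype.card_fin, nsmul_eq_mul]
    have : (1 / (n : ℝ)) ^ 2 * (n * ProbabilityTheory.variance φ ν)
        = (1 / n) * ProbabilityTheory.variance φ ν := by field_simp
    rw [this]
    gcongr
  have hZ : MemLp (fun xs => |A xs - ∫ y, φ y ∂ν|) 2 P :=
    (hALp.sub (memLp_const (∫ y, φ y ∂ν))).abs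
  -- Jensen's inequality `(E|Z|)² ≤ E Z²`, read off from `0 ≤ Var |Z|`.
  have hJ := ProbabilityTheory.variance_nonneg (fun xs => |A xs - ∫ y, φ y ∂ν|) P
  rw [ProbabilityTheory.variance_eq_sub hZ] at hJ
  have hsq : ∫ xs, ((fun xs => |A xs - ∫ y, φ y ∂ν|) ^ 2) xs ∂P
      = ProbabilityTheory.variance A P := by
    rw [ProbabilityTheory.variance_eq_integral hALp.aemeasurable, hmean]
    simp
  rw [hsq] at hJ
  have hn' : (0 : ℝ) < n := by exact_mod_cast hn
  refine abs_le_of_sq_le_sq' ?_ (by positivity) |>.2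
  rw [div_pow, Real.sq_sqrt hn'.le]
  have : (1 / (n : ℝ)) * (G / 2) ^ 2 ≤ G ^ 2 / n := by
    have : 0 ≤ G ^ 2 / n := by positivity
    have h : (1 / (n : ℝ)) * (G / 2) ^ 2 = G ^ 2 / n / 4 := by ring
    linarith
  linarith

/-- Gaussian kernel estimation of bounded distributions: for a
probability density `f` supported on `[−B,B]^d` and i.i.d. samples `x₁,…,x_n ∼ f`,
`E[ ∫ |(1/n)∑ᵢ g(x−xᵢ) − (f∗g)(x)| dx ] ≤ (2/√n)·(2B/√(2πσ²) + 1)^d`,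
where `g` is the density of `N(0,σ²I_d)`. -/
theorem gaussian_kernel_estimation (d : ℕ) (B σ : ℝ) (hB : 0 < B) (hσ : 0 < σ)
    (n : ℕ) (hn : 0 < n)
    (f : (Fin d → ℝ) → ℝ) (hfmeas : Measurable f) (hf0 : ∀ x, 0 ≤ f x)
    (hf1 : (∫ x, f x) = 1)
    (hsupp : ∀ x, (¬ ∀ i, x i ∈ Set.Icc (-B) B) → f x = 0) :
    (∫ xs, (∫ x, |(1 / (n : ℝ)) * ∑ i, gaussDensity d σ (x - xs i) -
        ∫ y, f y * gaussDensity d σ (x - y)|)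
      ∂(Measure.pi fun _ : Fin n =>
          volume.withDensity fun y => ENNReal.ofReal (f y)))
    ≤ (2 / Real.sqrt n) * (2 * B / Real.sqrt (2 * Real.pi * σ ^ 2) + 1) ^ d := by
  set ν : Measure (Fin d → ℝ) := volume.withDensity fun y => ENNReal.ofReal (f y) with hν
  have hfi : Integrable f := not_imp_comm.1 integral_undef (by rw [hf1]; norm_num)
  have hprob : IsProbabilityMeasure ν := by
    constructor
    rw [hν, withDensity_apply _ MeasurableSet.univ, Measure.restrict_univ,
      ← ofReal_integral_eq_lintegral_ofReal hfi (.of_forall hf0), hf1, ENNReal.ofReal_one]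
  have hbox : ∀ᵐ y ∂ν, ∀ i, y i ∈ Set.Icc (-B) B := by
    rw [hν, ae_withDensity_iff (by fun_prop)]
    refine .of_forall fun y hy => ?_
    by_contra h
    exact hy (by simp [hsupp y h])
  have hconv : ∀ x, ∫ y, f y * gaussDensity d σ (x - y) = ∫ y, gaussDensity d σ (x - y) ∂ν := by
    intro x
    rw [hν, integral_withDensity_eq_integral_toReal_smul (by fun_prop) (.of_forall (by simp))]
    simp [hf0]
  simp_rw [hconv]
  set G : (Fin d → ℝ) → ℝ := fun x => ∏ i, boxEnvelope B σ (x i) with hG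
  have hG0 : ∀ x, 0 ≤ G x := fun x => Finset.prod_nonneg fun i _ => boxEnvelope_nonneg _ _ _
  have hGi : Integrable G := integrable_boxEnvelope_prod d hB hσ
  have hbd : ∀ x, ∀ᵐ y ∂ν, gaussDensity d σ (x - y) ∈ Set.Icc 0 (G x) := fun x =>
    hbox.mono fun y hy => ⟨gaussDensity_nonneg _ _ _, gaussDensity_sub_le d x y hy⟩
  have hn' : (0 : ℝ) < n := by exact_mod_cast hn
  set P := Measure.pi fun _ : Fin n => ν
  have hm : Measurable fun x => ∫ y, gaussDensity d σ (x - y) ∂ν := by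
    have : StronglyMeasurable fun p : (Fin d → ℝ) × (Fin d → ℝ) => gaussDensity d σ (p.1 - p.2) :=
      Continuous.stronglyMeasurable (by fun_prop)
    exact this.integral_prod_right'.measurable
  have hmb : ∀ x, ∫ y, gaussDensity d σ (x - y) ∂ν ∈ Set.Icc 0 (G x) := fun x =>
    ⟨integral_nonneg fun y => gaussDensity_nonneg _ _ _, by
      have hi : Integrable (fun y => gaussDensity d σ (x - y)) ν :=
        (memLp_of_bounded (hbd x) (by fun_prop) 1).integrable le_rfl
      simpa using integral_mono_ae hi (integrable_const (G x)) ((hbd x).mono fun y hy => hy.2)⟩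
  have hboxP : ∀ᵐ xs ∂P, ∀ k, ∀ i, xs k i ∈ Set.Icc (-B) B :=
    Filter.eventually_all.2 fun k =>
      (measurePreserving_eval (fun _ : Fin n => ν) k).quasiMeasurePreserving.ae hbox
  have hint : Integrable (Function.uncurry fun (xs : Fin n → Fin d → ℝ) (x : Fin d → ℝ) =>
      |(1 / (n : ℝ)) * ∑ i, gaussDensity d σ (x - xs i) - ∫ y, gaussDensity d σ (x - y) ∂ν|)
      (P.prod volume) := by
    refine Integrable.mono' (g := fun p => G p.2) (hGi.comp_snd P) ?_ ?_
    · refine Measurable.aestronglyMeasurable ?_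
      have h1 : Measurable fun p : (Fin n → Fin d → ℝ) × (Fin d → ℝ) =>
          (1 / (n : ℝ)) * ∑ i, gaussDensity d σ (p.2 - p.1 i) :=
        Continuous.measurable (by fun_prop)
      exact (h1.sub (hm.comp measurable_snd)).abs
    · filter_upwards [Measure.quasiMeasurePreserving_fst.ae hboxP] with p hp
      have h0 : 0 ≤ (1 / (n : ℝ)) * ∑ i, gaussDensity d σ (p.2 - p.1 i) :=
        mul_nonneg (by positivity) (Finset.sum_nonneg fun i _ => gaussDensity_nonneg _ _ _)
      have h1 : (1 / (n : ℝ)) * ∑ i, gaussDensity d σ (p.2 - p.1 i) ≤ G p.2 := by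
        have : ∑ i, gaussDensity d σ (p.2 - p.1 i) ≤ ∑ _i : Fin n, G p.2 :=
          Finset.sum_le_sum fun i _ => gaussDensity_sub_le d _ _ (hp i)
        simp only [Finset.sum_const, Finset.card_univ, Fintype.card_fin, nsmul_eq_mul] at this
        rw [one_div, inv_mul_le_iff₀ hn']
        exact this
      obtain ⟨h2, h3⟩ := hmb p.2
      simp only [Function.uncurry, Real.norm_eq_abs, abs_abs]
      rw [abs_le]
      constructor <;> linarith
  rw [integral_integral_swap hint]
  calc _ ≤ ∫ x, G x / √n := by
        refine integral_mono hint.integral_prod_right (hGi.div_const _) fun x => ?_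
        exact integral_abs_mean_sub_le ν hn (φ := fun y => gaussDensity d σ (x - y))
          (Continuous.measurable (by fun_prop)) (hG0 x) (hbd x)
    _ = (1 / √n) * (2 * B / √(2 * π * σ ^ 2) + 1) ^ d := by
        rw [integral_div, hG, integral_boxEnvelope_prod d hB hσ]
        ring
    _ ≤ _ := by
        gcongr
        norm_num
end
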